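/- Suppose (P) has a KKT point y* (Assumption 1). Let β > 1, μ₀ > 0 and μ_k = β^k·μ₀ for k ≥ 1; let {ξ_k}_{k≥1} ⊂ [0, ∞) satisfy Σ_{k=1}^∞ √(2 ξ_k μ_k) < ∞ and ξ_k ≤ C₀/μ_k for some C₀ ≥ 0 and all k. Let {x_k}_{k≥1} ⊆ χ, y₁ = 0, y_{k+1} = μ_k·( Π_K(Ax_k − b − y_k/μ_k) − (Ax_k − b − y_k/μ_k) ), and suppose L_{μ_k}(x_k, y_k) ≤ g_{μ_k}(y_k) + ξ_k for all k ≥ 1. Then lim_{k→∞} p(x_k) = p* and lim_{k→∞} d_K(Ax_k − b) = 0; moreover, every accumulation point x̄ of the sequence {x_k} is an optimal solution of (P), i.e. x̄ ∈ χ, Ax̄ − b ∈ K and p(x̄) = p*. -/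

import Mathlib

open RealInnerProductSpace Metric

/-- The dual cone `K* = {y : ⟪y, s⟫ ≥ 0 for all s ∈ K}`. -/
def dualCone {m : ℕ} (K : Set (EuclideanSpace ℝ (Fin m))) :
    Set (EuclideanSpace ℝ (Fin m)) :=
  {y | ∀ s ∈ K, 0 ≤ ⟪y, s⟫}

/-- The penalty Lagrangian
`L_μ(x, y) = p(x) + (μ/2)·d_K(Ax - b - y/μ)² - ‖y‖²/(2μ)`. -/
noncomputable def Lpen {n m : ℕ}
    (A : EuclideanSpace ℝ (Fin n) →L[ℝ] EuclideanSpace ℝ (Fin m))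
    (b : EuclideanSpace ℝ (Fin m)) (K : Set (EuclideanSpace ℝ (Fin m)))
    (p : EuclideanSpace ℝ (Fin n) → ℝ) (μ : ℝ)
    (x : EuclideanSpace ℝ (Fin n)) (y : EuclideanSpace ℝ (Fin m)) : ℝ :=
  p x + μ / 2 * (infDist (A x - b - μ⁻¹ • y) K) ^ 2 - ‖y‖ ^ 2 / (2 * μ)

/-- `g_μ(y) = inf_{x ∈ χ} L_μ(x, y)`. -/
noncomputable def gmu {n m : ℕ}
    (A : EuclideanSpace ℝ (Fin n) →L[ℝ] EuclideanSpace ℝ (Fin m))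
    (b : EuclideanSpace ℝ (Fin m)) (K : Set (EuclideanSpace ℝ (Fin m)))
    (χ : Set (EuclideanSpace ℝ (Fin n)))
    (p : EuclideanSpace ℝ (Fin n) → ℝ) (μ : ℝ) (y : EuclideanSpace ℝ (Fin m)) : ℝ :=
  sInf ((fun x => Lpen A b K p μ x y) '' χ)

/-- The Lagrangian dual function `g₀(z) = inf_{x ∈ χ} { p(x) - ⟪z, Ax - b⟫ }`. -/
noncomputable def gzero {n m : ℕ}
    (A : EuclideanSpace ℝ (Fin n) →L[ℝ] EuclideanSpace ℝ (Fin m))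
    (b : EuclideanSpace ℝ (Fin m)) (χ : Set (EuclideanSpace ℝ (Fin n)))
    (p : EuclideanSpace ℝ (Fin n) → ℝ) (z : EuclideanSpace ℝ (Fin m)) : ℝ :=
  sInf ((fun x => p x - ⟪z, A x - b⟫) '' χ)

/-- The optimal value `p* = inf { p(x) : x ∈ χ, Ax - b ∈ K }` of the conic program (P). -/
noncomputable def pstar {n m : ℕ}
    (A : EuclideanSpace ℝ (Fin n) →L[ℝ] EuclideanSpace ℝ (Fin m))
    (b : EuclideanSpace ℝ (Fin m)) (K : Set (EuclideanSpace ℝ (Fin m)))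
    (χ : Set (EuclideanSpace ℝ (Fin n)))
    (p : EuclideanSpace ℝ (Fin n) → ℝ) : ℝ :=
  sInf (p '' {x ∈ χ | A x - b ∈ K})

/-!
Write `c x = A x - b` and `δ_k = (y_{k+1} - y_k) / μ_k`. The multiplier update says exactly that
`c x_k + δ_k ∈ K`; hence `d_K(c x_k) ≤ ‖δ_k‖`, and pairing with the KKT point `y*` gives
`p* - ⟪y*, δ_k⟫ ≤ p(x_k)`. The update also turns the value `L_{μ_k}(x_k, y_k)` into
`p(x_k) + (‖y_{k+1}‖² - ‖y_k‖²) / (2 μ_k)`, which is at most `p* + ξ_k` because the penalty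
Lagrangian lies below `p` on feasible points. Chaining the two bounds yields
`‖y_{k+1} - y*‖² ≤ ‖y_k - y*‖² + 2 ξ_k μ_k`; hence the multipliers stay bounded, `δ_k → 0`, and
both bounds on `p(x_k)` converge to `p*`.
-/

open Filter Topology

/-- The penalty Lagrangian of the program `min {p x : c x ∈ K, x ∈ χ}` with an arbitrary constraint
map `c`; `Lpen` is the case `c x = A x - b`. -/
noncomputable def penaltyLagrangian {X F : Type*} [NormedAddCommGroup F] [NormedSpace ℝ F]
    (c : X → F) (K : Set F) (p : X → ℝ) (μ : ℝ) (x : X) (y : F) : ℝ :=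
  p x + μ / 2 * infDist (c x - μ⁻¹ • y) K ^ 2 - ‖y‖ ^ 2 / (2 * μ)

/-- One step of the inexact augmented Lagrangian method with penalty `μ`, tolerance `ξ` and
multiplier `y`: the point `x` minimizes the penalty Lagrangian over `χ` up to `ξ`, and `y'` is the
updated multiplier. The projection onto `K` is encoded as a choice of a nearest point, which makes
sense for nonconvex `K` too. -/
structure IsAugLagrangianStep {X F : Type*} [NormedAddCommGroup F] [NormedSpace ℝ F]
    (c : X → F) (K : Set F) (χ : Set X) (p : X → ℝ) (μ ξ : ℝ) (x : X) (y y' : F) : Prop where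
  mem : x ∈ χ
  le_add : ∀ z ∈ χ, penaltyLagrangian c K p μ x y ≤ penaltyLagrangian c K p μ z y + ξ
  exists_nearest : ∃ s ∈ K, (∀ t ∈ K, ‖c x - μ⁻¹ • y - s‖ ≤ ‖c x - μ⁻¹ • y - t‖) ∧
    y' = μ • (s - (c x - μ⁻¹ • y))

section PenaltyLagrangian

variable {X F : Type*} [NormedAddCommGroup F] [NormedSpace ℝ F]
  {c : X → F} {K : Set F} {p : X → ℝ} {μ : ℝ} {x : X}

theorem sub_le_penaltyLagrangian (hμ : 0 ≤ μ) (y : F) :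
    p x - ‖y‖ ^ 2 / (2 * μ) ≤ penaltyLagrangian c K p μ x y := by
  have penalty_nonneg : 0 ≤ μ / 2 * infDist (c x - μ⁻¹ • y) K ^ 2 := by positivity
  unfold penaltyLagrangian
  linarith

theorem penaltyLagrangian_le_of_mem (hμ : 0 < μ) (hx : c x ∈ K) (y : F) :
    penaltyLagrangian c K p μ x y ≤ p x := by
  have dist_le : infDist (c x - μ⁻¹ • y) K ≤ ‖y‖ / μ := by
    calc infDist (c x - μ⁻¹ • y) K
        ≤ dist (c x - μ⁻¹ • y) (c x) := infDist_le_dist_of_mem hx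
      _ = ‖y‖ / μ := by
          rw [dist_eq_norm, sub_sub_cancel_left, norm_neg, norm_smul,
            Real.norm_of_nonneg (inv_pos.2 hμ).le, inv_mul_eq_div]
  have penalty_le : μ / 2 * infDist (c x - μ⁻¹ • y) K ^ 2 ≤ ‖y‖ ^ 2 / (2 * μ) := by
    calc μ / 2 * infDist (c x - μ⁻¹ • y) K ^ 2
        ≤ μ / 2 * (‖y‖ / μ) ^ 2 := by gcongr; exact infDist_nonneg
      _ = ‖y‖ ^ 2 / (2 * μ) := by field_simp
  unfold penaltyLagrangian
  linarith

end PenaltyLagrangian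

namespace IsAugLagrangianStep

section NormedSpace

variable {X F : Type*} [NormedAddCommGroup F] [NormedSpace ℝ F]
  {c : X → F} {K : Set F} {χ : Set X} {p : X → ℝ} {μ ξ P : ℝ} {x : X} {y y' : F}

theorem tolerance_nonneg (h : IsAugLagrangianStep c K χ p μ ξ x y y') : 0 ≤ ξ :=
  le_add_iff_nonneg_right _ |>.1 (h.le_add x h.mem)

theorem constraint_add_mem (h : IsAugLagrangianStep c K χ p μ ξ x y y') (hμ : μ ≠ 0) :
    c x + μ⁻¹ • (y' - y) ∈ K := by
  obtain ⟨s, hs, -, rfl⟩ := h.exists_nearest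
  convert hs using 1
  rw [smul_sub, inv_smul_smul₀ hμ]
  abel

theorem infDist_constraint_le (h : IsAugLagrangianStep c K χ p μ ξ x y y') (hμ : μ ≠ 0) :
    infDist (c x) K ≤ ‖μ⁻¹ • (y' - y)‖ := by
  simpa [dist_eq_norm] using infDist_le_dist_of_mem (x := c x) (h.constraint_add_mem hμ)

theorem infDist_eq (h : IsAugLagrangianStep c K χ p μ ξ x y y') (hμ : 0 < μ) :
    infDist (c x - μ⁻¹ • y) K = ‖y'‖ / μ := by
  obtain ⟨s, hs, hnearest, rfl⟩ := h.exists_nearest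
  have dist_eq : infDist (c x - μ⁻¹ • y) K = ‖c x - μ⁻¹ • y - s‖ := by
    refine le_antisymm ?_ ((le_infDist ⟨s, hs⟩).2 fun t ht => ?_)
    · simpa only [dist_eq_norm] using infDist_le_dist_of_mem hs
    · simpa only [dist_eq_norm] using hnearest t ht
  rw [dist_eq, norm_smul, Real.norm_of_nonneg hμ.le, mul_div_cancel_left₀ _ hμ.ne', norm_sub_rev]

theorem penaltyLagrangian_eq (h : IsAugLagrangianStep c K χ p μ ξ x y y') (hμ : 0 < μ) :
    penaltyLagrangian c K p μ x y = p x + (‖y'‖ ^ 2 - ‖y‖ ^ 2) / (2 * μ) := by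
  rw [penaltyLagrangian, h.infDist_eq hμ]
  field_simp
  ring

theorem objective_add_le (h : IsAugLagrangianStep c K χ p μ ξ x y y') (hμ : 0 < μ)
    (hP : IsGLB (p '' {z ∈ χ | c z ∈ K}) P) :
    p x + (‖y'‖ ^ 2 - ‖y‖ ^ 2) / (2 * μ) ≤ P + ξ := by
  rw [← h.penaltyLagrangian_eq hμ, ← sub_le_iff_le_add]
  refine hP.2 ?_
  rintro _ ⟨z, ⟨hzχ, hzK⟩, rfl⟩
  linarith [h.le_add z hzχ, penaltyLagrangian_le_of_mem (p := p) hμ hzK y]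

theorem objective_le (h : IsAugLagrangianStep c K χ p μ ξ x y y') (hμ : 0 < μ)
    (hP : IsGLB (p '' {z ∈ χ | c z ∈ K}) P) :
    p x ≤ P + ξ + μ⁻¹ * (‖y‖ ^ 2 / 2) := by
  have split_quotient : (‖y'‖ ^ 2 - ‖y‖ ^ 2) / (2 * μ)
      = ‖y'‖ ^ 2 / (2 * μ) - μ⁻¹ * (‖y‖ ^ 2 / 2) := by field_simp
  have new_multiplier_nonneg : 0 ≤ ‖y'‖ ^ 2 / (2 * μ) := by positivity
  linarith [h.objective_add_le hμ hP]

end NormedSpace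

section InnerProductSpace

variable {X F : Type*} [NormedAddCommGroup F] [InnerProductSpace ℝ F]
  {c : X → F} {K : Set F} {χ : Set X} {p : X → ℝ} {μ ξ P : ℝ} {x : X} {y y' ystar : F}

theorem sub_inner_le_objective (h : IsAugLagrangianStep c K χ p μ ξ x y y') (hμ : μ ≠ 0)
    (hdual : ∀ s ∈ K, 0 ≤ ⟪ystar, s⟫) (hKKT : ∀ z ∈ χ, P ≤ p z - ⟪ystar, c z⟫) :
    P - ⟪ystar, μ⁻¹ • (y' - y)⟫ ≤ p x := by
  have dual_nonneg := hdual _ (h.constraint_add_mem hμ)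
  rw [inner_add_right] at dual_nonneg
  linarith [hKKT x h.mem]

theorem norm_sub_sq_le (h : IsAugLagrangianStep c K χ p μ ξ x y y') (hμ : 0 < μ)
    (hP : IsGLB (p '' {z ∈ χ | c z ∈ K}) P)
    (hdual : ∀ s ∈ K, 0 ≤ ⟪ystar, s⟫) (hKKT : ∀ z ∈ χ, P ≤ p z - ⟪ystar, c z⟫) :
    ‖y' - ystar‖ ^ 2 ≤ ‖y - ystar‖ ^ 2 + 2 * ξ * μ := by
  have gap_eq : (‖y' - ystar‖ ^ 2 - ‖y - ystar‖ ^ 2) / (2 * μ)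
      = (‖y'‖ ^ 2 - ‖y‖ ^ 2) / (2 * μ) - ⟪ystar, μ⁻¹ • (y' - y)⟫ := by
    rw [norm_sub_sq_real, norm_sub_sq_real, real_inner_smul_right, inner_sub_right,
      real_inner_comm ystar y', real_inner_comm ystar y]
    field_simp
    ring
  have gap_le : (‖y' - ystar‖ ^ 2 - ‖y - ystar‖ ^ 2) / (2 * μ) ≤ ξ := by
    linarith [h.objective_add_le hμ hP, h.sub_inner_le_objective hμ.ne' hdual hKKT]
  rw [div_le_iff₀ (by positivity)] at gap_le
  linarith

theorem norm_sub_le (h : IsAugLagrangianStep c K χ p μ ξ x y y') (hμ : 0 < μ)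
    (hP : IsGLB (p '' {z ∈ χ | c z ∈ K}) P)
    (hdual : ∀ s ∈ K, 0 ≤ ⟪ystar, s⟫) (hKKT : ∀ z ∈ χ, P ≤ p z - ⟪ystar, c z⟫) :
    ‖y' - ystar‖ ≤ ‖y - ystar‖ + √(2 * ξ * μ) := by
  have tolerance_nonneg := h.tolerance_nonneg
  refine le_of_sq_le_sq ?_ (by positivity)
  calc ‖y' - ystar‖ ^ 2
      ≤ ‖y - ystar‖ ^ 2 + √(2 * ξ * μ) ^ 2 := by
        rw [Real.sq_sqrt (by positivity)]
        exact h.norm_sub_sq_le hμ hP hdual hKKT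
    _ ≤ (‖y - ystar‖ + √(2 * ξ * μ)) ^ 2 :=
        pow_add_pow_le (norm_nonneg _) (Real.sqrt_nonneg _) two_ne_zero

end InnerProductSpace

end IsAugLagrangianStep

section Sequences

theorem isBoundedUnder_le_of_le_add_summable {a ε : ℕ → ℝ} (hε : Summable ε)
    (ha : ∀ᶠ k in atTop, a (k + 1) ≤ a k + ε k) : IsBoundedUnder (· ≤ ·) atTop a := by
  obtain ⟨N, hN⟩ := eventually_atTop.1 ha
  have sub_sum_le : ∀ k ≥ N, a k - ∑ i ∈ Finset.range k, ε i ≤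
      a N - ∑ i ∈ Finset.range N, ε i := by
    intro k hk
    induction k, hk using Nat.le_induction with
    | base => rfl
    | succ k hk ih =>
      rw [Finset.sum_range_succ]
      linarith [hN k hk]
  have sub_sum_bounded := isBoundedUnder_of_eventually_le (eventually_atTop.2 ⟨N, sub_sum_le⟩)
  have sum_bounded := hε.hasSum.tendsto_sum_nat.isBoundedUnder_le
  simpa [Pi.add_def] using isBoundedUnder_le_add sub_sum_bounded sum_bounded

theorem tendsto_zero_of_tendsto_sqrt_mul {ι : Type*} {l : Filter ι} {μ ξ : ι → ℝ}
    (hμ : Tendsto μ l atTop) (hξ : ∀ᶠ k in l, 0 ≤ ξ k)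
    (h : Tendsto (fun k => √(2 * ξ k * μ k)) l (𝓝 0)) : Tendsto ξ l (𝓝 0) := by
  have limit : Tendsto (fun k => √(2 * ξ k * μ k) ^ 2 * (2⁻¹ * (μ k)⁻¹)) l (𝓝 0) := by
    simpa using (h.pow 2).mul (hμ.inv_tendsto_atTop.const_mul 2⁻¹)
  refine limit.congr' ?_
  filter_upwards [hξ, hμ.eventually_gt_atTop 0] with k hξk hμk
  rw [Real.sq_sqrt (by positivity)]
  field_simp

theorem tendsto_inv_smul_succ_sub {F : Type*} [NormedAddCommGroup F] [NormedSpace ℝ F]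
    {μ : ℕ → ℝ} {y : ℕ → F} (hμ : Tendsto μ atTop atTop)
    (hy : IsBoundedUnder (· ≤ ·) atTop fun k => ‖y k‖) :
    Tendsto (fun k => (μ k)⁻¹ • (y (k + 1) - y k)) atTop (𝓝 0) := by
  have hy_succ := (tendsto_add_atTop_nat 1).isBoundedUnder_comp hy
  refine hμ.inv_tendsto_atTop.zero_smul_isBoundedUnder_le ?_
  exact (isBoundedUnder_le_add hy_succ hy).mono_le
    (.of_forall fun k => norm_sub_le (y (k + 1)) (y k))

theorem eq_of_mapClusterPt_of_tendsto {ι X Y : Type*} [TopologicalSpace X] [TopologicalSpace Y]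
    [T2Space Y] {l : Filter ι} {x : ι → X} {s : Set X} {f : X → Y} {a : X} {b : Y}
    (hf : ContinuousWithinAt f s a) (hx : ∀ᶠ k in l, x k ∈ s) (ha : MapClusterPt a l x)
    (h : Tendsto (fun k => f (x k)) l (𝓝 b)) : f a = b := by
  obtain ⟨u, hul, hxu⟩ := mapClusterPt_iff_ultrafilter.1 ha
  have tendsto_within := tendsto_nhdsWithin_iff.2 ⟨hxu, hx.filter_mono hul⟩
  exact tendsto_nhds_unique (hf.tendsto.comp tendsto_within) (h.mono_left hul)

end Sequences

section Convergence

theorem tendsto_infDist_constraint {X F : Type*} [NormedAddCommGroup F] [NormedSpace ℝ F]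
    {c : X → F} {K : Set F} {χ : Set X} {p : X → ℝ} {μ ξ : ℕ → ℝ} {x : ℕ → X} {y : ℕ → F}
    (hμ : ∀ᶠ k in atTop, 0 < μ k)
    (hstep : ∀ᶠ k in atTop, IsAugLagrangianStep c K χ p (μ k) (ξ k) (x k) (y k) (y (k + 1)))
    (hδ : Tendsto (fun k => (μ k)⁻¹ • (y (k + 1) - y k)) atTop (𝓝 0)) :
    Tendsto (fun k => infDist (c (x k)) K) atTop (𝓝 0) := by
  refine squeeze_zero' (.of_forall fun _ => infDist_nonneg) ?_
    (tendsto_zero_iff_norm_tendsto_zero.1 hδ)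
  filter_upwards [hμ, hstep] with k hμk hk using hk.infDist_constraint_le hμk.ne'

variable {X F : Type*} [NormedAddCommGroup F] [InnerProductSpace ℝ F]
  {c : X → F} {K : Set F} {χ : Set X} {p : X → ℝ} {P : ℝ} {ystar : F}
  {μ ξ : ℕ → ℝ} {x : ℕ → X} {y : ℕ → F}

theorem isBoundedUnder_norm_multiplier (hP : IsGLB (p '' {z ∈ χ | c z ∈ K}) P)
    (hdual : ∀ s ∈ K, 0 ≤ ⟪ystar, s⟫) (hKKT : ∀ z ∈ χ, P ≤ p z - ⟪ystar, c z⟫)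
    (hμ : ∀ᶠ k in atTop, 0 < μ k) (hsum : Summable fun k => √(2 * ξ k * μ k))
    (hstep : ∀ᶠ k in atTop, IsAugLagrangianStep c K χ p (μ k) (ξ k) (x k) (y k) (y (k + 1))) :
    IsBoundedUnder (· ≤ ·) atTop fun k => ‖y k‖ := by
  have dist_bounded : IsBoundedUnder (· ≤ ·) atTop fun k => ‖y k - ystar‖ := by
    refine isBoundedUnder_le_of_le_add_summable hsum ?_
    filter_upwards [hμ, hstep] with k hμk hk using hk.norm_sub_le hμk hP hdual hKKT
  exact (isBoundedUnder_le_add dist_bounded (isBoundedUnder_const (a := ‖ystar‖))).mono_le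
    (.of_forall fun k => norm_le_norm_sub_add (y k) ystar)

theorem tendsto_objective (hP : IsGLB (p '' {z ∈ χ | c z ∈ K}) P)
    (hdual : ∀ s ∈ K, 0 ≤ ⟪ystar, s⟫) (hKKT : ∀ z ∈ χ, P ≤ p z - ⟪ystar, c z⟫)
    (hμ : Tendsto μ atTop atTop) (hξ : Tendsto ξ atTop (𝓝 0))
    (hstep : ∀ᶠ k in atTop, IsAugLagrangianStep c K χ p (μ k) (ξ k) (x k) (y k) (y (k + 1)))
    (hy : IsBoundedUnder (· ≤ ·) atTop fun k => ‖y k‖) :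
    Tendsto (fun k => p (x k)) atTop (𝓝 P) := by
  have lower : Tendsto (fun k => P - ⟪ystar, (μ k)⁻¹ • (y (k + 1) - y k)⟫) atTop (𝓝 P) := by
    simpa using
      (tendsto_const_nhds.inner (tendsto_inv_smul_succ_sub hμ hy)).const_sub P
  have sq_norm_bounded : IsBoundedUnder (· ≤ ·) atTop (norm ∘ fun k => ‖y k‖ ^ 2 / 2) := by
    obtain ⟨B, hB⟩ := hy.eventually_le
    refine isBoundedUnder_of_eventually_le (a := B ^ 2 / 2) ?_
    filter_upwards [hB] with k hk
    rw [Function.comp_apply, Real.norm_of_nonneg (by positivity)]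
    gcongr
  have penalty : Tendsto (fun k => (μ k)⁻¹ * (‖y k‖ ^ 2 / 2)) atTop (𝓝 0) :=
    hμ.inv_tendsto_atTop.zero_mul_isBoundedUnder_le sq_norm_bounded
  have upper : Tendsto (fun k => P + ξ k + (μ k)⁻¹ * (‖y k‖ ^ 2 / 2)) atTop (𝓝 P) := by
    simpa using (hξ.const_add P).add penalty
  have hμpos := hμ.eventually_gt_atTop 0
  refine tendsto_of_tendsto_of_tendsto_of_le_of_le' lower upper ?_ ?_
  · filter_upwards [hμpos, hstep] with k hμk hk using
      hk.sub_inner_le_objective hμk.ne' hdual hKKT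
  · filter_upwards [hμpos, hstep] with k hμk hk using hk.objective_le hμk hP

end Convergence

theorem stmt_18_general {X F : Type*} [TopologicalSpace X] [NormedAddCommGroup F]
    [InnerProductSpace ℝ F] {K : Set F} (hK : IsClosed K) {χ : Set X} (hχ : IsClosed χ)
    {c : X → F} (hc : ContinuousOn c χ) {p : X → ℝ} (hp : ContinuousOn p χ)
    {P : ℝ} (hP : IsGLB (p '' {z ∈ χ | c z ∈ K}) P)
    {ystar : F} (hdual : ∀ s ∈ K, 0 ≤ ⟪ystar, s⟫) (hKKT : ∀ z ∈ χ, P ≤ p z - ⟪ystar, c z⟫)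
    {μ ξ : ℕ → ℝ} (hμ : Tendsto μ atTop atTop) (hsum : Summable fun k => √(2 * ξ k * μ k))
    {x : ℕ → X} {y : ℕ → F}
    (hstep : ∀ᶠ k in atTop, IsAugLagrangianStep c K χ p (μ k) (ξ k) (x k) (y k) (y (k + 1))) :
    Tendsto (fun k => p (x k)) atTop (𝓝 P) ∧
    Tendsto (fun k => infDist (c (x k)) K) atTop (𝓝 0) ∧
    ∀ xbar : X, MapClusterPt xbar atTop x → xbar ∈ χ ∧ c xbar ∈ K ∧ p xbar = P := by
  have hμpos := hμ.eventually_gt_atTop 0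
  have hξ := tendsto_zero_of_tendsto_sqrt_mul hμ (hstep.mono fun _ hk => hk.tolerance_nonneg)
    hsum.tendsto_atTop_zero
  have hy := isBoundedUnder_norm_multiplier hP hdual hKKT hμpos hsum hstep
  have objective := tendsto_objective hP hdual hKKT hμ hξ hstep hy
  have feasibility := tendsto_infDist_constraint hμpos hstep (tendsto_inv_smul_succ_sub hμ hy)
  have hx : ∀ᶠ k in atTop, x k ∈ χ := hstep.mono fun _ hk => hk.mem
  refine ⟨objective, feasibility, fun xbar hxbar => ?_⟩
  have hxbarχ : xbar ∈ χ := hχ.mem_of_mapClusterPt hxbar hx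
  obtain ⟨-, z, ⟨-, hzK⟩, rfl⟩ := hP.nonempty
  have infDist_eq_zero : infDist (c xbar) K = 0 :=
    eq_of_mapClusterPt_of_tendsto (f := fun z => infDist (c z) K)
      ((continuous_infDist_pt K).comp_continuousOn hc xbar hxbarχ) hx hxbar feasibility
  exact ⟨hxbarχ, (hK.mem_iff_infDist_zero ⟨c z, hzK⟩).2 infDist_eq_zero,
    eq_of_mapClusterPt_of_tendsto (hp xbar hxbarχ) hx hxbar objective⟩

section ConicProgram

variable {n m : ℕ} {K : Set (EuclideanSpace ℝ (Fin m))}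
  {A : EuclideanSpace ℝ (Fin n) →L[ℝ] EuclideanSpace ℝ (Fin m)} {b : EuclideanSpace ℝ (Fin m)}
  {χ : Set (EuclideanSpace ℝ (Fin n))} {p : EuclideanSpace ℝ (Fin n) → ℝ}
  {x : EuclideanSpace ℝ (Fin n)}

theorem isGLB_pstar (hbdd : BddBelow (p '' χ)) (hfeas : {x ∈ χ | A x - b ∈ K}.Nonempty) :
    IsGLB (p '' {x ∈ χ | A x - b ∈ K}) (pstar A b K χ p) :=
  isGLB_csInf (hfeas.image p) (hbdd.mono (Set.image_mono (Set.sep_subset _ _)))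

theorem gzero_le (hχ : IsCompact χ) (hp : ContinuousOn p χ) (z : EuclideanSpace ℝ (Fin m))
    (hx : x ∈ χ) : gzero A b χ p z ≤ p x - ⟪z, A x - b⟫ :=
  csInf_le (hχ.bddBelow_image (by fun_prop)) ⟨x, hx, rfl⟩

theorem Lpen_eq_penaltyLagrangian (μ : ℝ) (y : EuclideanSpace ℝ (Fin m)) :
    Lpen A b K p μ x y = penaltyLagrangian (fun x => A x - b) K p μ x y :=
  rfl

theorem gmu_le {μ : ℝ} (hbdd : BddBelow (p '' χ)) (hμ : 0 ≤ μ) (y : EuclideanSpace ℝ (Fin m))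
    (hx : x ∈ χ) : gmu A b K χ p μ y ≤ Lpen A b K p μ x y := by
  obtain ⟨q, hq⟩ := hbdd
  refine csInf_le ⟨q - ‖y‖ ^ 2 / (2 * μ), ?_⟩ ⟨x, hx, rfl⟩
  rintro _ ⟨z, hz, rfl⟩
  calc q - ‖y‖ ^ 2 / (2 * μ)
      ≤ p z - ‖y‖ ^ 2 / (2 * μ) := sub_le_sub_right (hq ⟨z, hz, rfl⟩) _
    _ ≤ Lpen A b K p μ z y := by
        rw [Lpen_eq_penaltyLagrangian]
        exact sub_le_penaltyLagrangian hμ y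

theorem isAugLagrangianStep_of_Lpen_le {μ ξ : ℝ} {y y' s : EuclideanSpace ℝ (Fin m)}
    (hbdd : BddBelow (p '' χ)) (hμ : 0 ≤ μ) (hx : x ∈ χ)
    (hL : Lpen A b K p μ x y ≤ gmu A b K χ p μ y + ξ) (hs : s ∈ K)
    (hnearest : ∀ t ∈ K, ‖A x - b - μ⁻¹ • y - s‖ ≤ ‖A x - b - μ⁻¹ • y - t‖)
    (hy' : y' = μ • (s - (A x - b - μ⁻¹ • y))) :
    IsAugLagrangianStep (fun x => A x - b) K χ p μ ξ x y y' where
  mem := hx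
  le_add z hz := by
    rw [← Lpen_eq_penaltyLagrangian, ← Lpen_eq_penaltyLagrangian]
    linarith [gmu_le (A := A) (b := b) (K := K) hbdd hμ y hz]
  exists_nearest := ⟨s, hs, hnearest, hy'⟩

end ConicProgram

/-- convergence of the primal ALCC iterates. Under the hypotheses of
Statement 17, `p(x_k) → p*`, `d_K(Ax_k - b) → 0`, and every accumulation point `x̄` of
`{x_k}` is an optimal solution of (P): `x̄ ∈ χ`, `Ax̄ - b ∈ K` and `p(x̄) = p*`. -/
theorem stmt_18 {n m : ℕ} (K : Set (EuclideanSpace ℝ (Fin m)))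
    (hKne : K.Nonempty) (hKcl : IsClosed K) (hKcv : Convex ℝ K)
    (hKcone : ∀ (c : ℝ), 0 ≤ c → ∀ x ∈ K, c • x ∈ K)
    (A : EuclideanSpace ℝ (Fin n) →L[ℝ] EuclideanSpace ℝ (Fin m))
    (b : EuclideanSpace ℝ (Fin m))
    (χ : Set (EuclideanSpace ℝ (Fin n)))
    (hχne : χ.Nonempty) (hχcp : IsCompact χ) (hχcv : Convex ℝ χ)
    (p : EuclideanSpace ℝ (Fin n) → ℝ) (hp : ConvexOn ℝ Set.univ p)
    (hfeas : {x ∈ χ | A x - b ∈ K}.Nonempty)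
    (ystar : EuclideanSpace ℝ (Fin m)) (hystar : ystar ∈ dualCone K)
    (hKKT : gzero A b χ p ystar = pstar A b K χ p)
    -- `PK` is the Euclidean projection onto `K`
    (PK : EuclideanSpace ℝ (Fin m) → EuclideanSpace ℝ (Fin m))
    (hPKmem : ∀ v, PK v ∈ K)
    (hPK : ∀ v, ∀ s ∈ K, ‖v - PK v‖ ≤ ‖v - s‖)
    (β μ₀ : ℝ) (hβ : 1 < β) (hμ₀ : 0 < μ₀)
    (μ : ℕ → ℝ) (hμ : ∀ k, 1 ≤ k → μ k = β ^ k * μ₀)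
    (ξ : ℕ → ℝ) (hξ : ∀ k, 1 ≤ k → 0 ≤ ξ k)
    (hsum : Summable (fun k : ℕ => Real.sqrt (2 * ξ (k + 1) * μ (k + 1))))
    (C₀ : ℝ) (hC₀ : 0 ≤ C₀) (hξμ : ∀ k, 1 ≤ k → ξ k ≤ C₀ / μ k)
    (x : ℕ → EuclideanSpace ℝ (Fin n)) (hx : ∀ k, 1 ≤ k → x k ∈ χ)
    (y : ℕ → EuclideanSpace ℝ (Fin m)) (hy1 : y 1 = 0)
    (hyrec : ∀ k, 1 ≤ k → y (k + 1)
      = μ k • (PK (A (x k) - b - (μ k)⁻¹ • y k) - (A (x k) - b - (μ k)⁻¹ • y k)))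
    (hL : ∀ k, 1 ≤ k →
      Lpen A b K p (μ k) (x k) (y k) ≤ gmu A b K χ p (μ k) (y k) + ξ k) :
    Filter.Tendsto (fun k => p (x k)) Filter.atTop (nhds (pstar A b K χ p)) ∧
    Filter.Tendsto (fun k => infDist (A (x k) - b) K) Filter.atTop (nhds 0) ∧
    ∀ xbar : EuclideanSpace ℝ (Fin n), MapClusterPt xbar Filter.atTop x →
      xbar ∈ χ ∧ A xbar - b ∈ K ∧ p xbar = pstar A b K χ p := by
  have hpc : Continuous p := continuousOn_univ.1 (hp.continuousOn isOpen_univ)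
  have hbdd : BddBelow (p '' χ) := hχcp.bddBelow_image hpc.continuousOn
  have hμ_tendsto : Tendsto μ atTop atTop :=
    ((tendsto_pow_atTop_atTop_of_one_lt hβ).atTop_mul_const hμ₀).congr'
      (eventually_atTop.2 ⟨1, fun k hk => (hμ k hk).symm⟩)
  refine stmt_18_general hKcl hχcp.isClosed (by fun_prop) hpc.continuousOn
    (isGLB_pstar hbdd hfeas) hystar (fun z hz => hKKT ▸ gzero_le hχcp hpc.continuousOn ystar hz)
    hμ_tendsto ((summable_nat_add_iff 1).1 hsum) (y := y) ?_
  filter_upwards [eventually_ge_atTop 1, hμ_tendsto.eventually_ge_atTop 0] with k hk hμk using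
    isAugLagrangianStep_of_Lpen_le hbdd hμk (hx k hk) (hL k hk) (hPKmem _) (hPK _) (hyrec k hk)
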